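/- Let R be a WLL DCTRS over a signature F. Then the many-step reduction relations of R and of T(R) coincide on T(F,V): for all terms s, t ∈ T(F,V), s →*_R t if and only if s →*_{T(R)} t. -/

import Mathlib

set_option autoImplicit false

/-- First-order terms over a signature `F` and variables `V`. -/
inductive Term (F : Type) (V : Type) : Type where
  | var : V → Term F V
  | app : F → List (Term F V) → Term F V

namespace Term

variable {F V G W : Type}

/-- Application of a substitution. -/
def subst (σ : V → Term F W) : Term F V → Term F W
  | .var x => σ x
  | .app f ts => .app f (ts.attach.map (fun ⟨t, _⟩ => subst σ t))

/-- Renaming of variables. -/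
def rename (g : V → W) (t : Term F V) : Term F W := t.subst (fun x => .var (g x))

/-- Mapping of function symbols. -/
def mapF (g : F → G) : Term F V → Term G V
  | .var x => .var x
  | .app f ts => .app (g f) (ts.attach.map (fun ⟨t, _⟩ => mapF g t))

/-- Number of occurrences of the variable `x` in a term. -/
def count [DecidableEq V] (x : V) : Term F V → ℕ
  | .var y => if y = x then 1 else 0
  | .app _ ts => (ts.attach.map (fun ⟨t, _⟩ => count x t)).sum

/-- The list of variables occurring in a term (with repetitions). -/
def varList : Term F V → List V
  | .var x => [x]
  | .app _ ts => ts.attach.flatMap (fun ⟨t, _⟩ => varList t)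

/-- A term is linear if every variable occurs at most once in it. -/
def Linear [DecidableEq V] (t : Term F V) : Prop := ∀ x : V, t.count x ≤ 1

/-- Well-formedness of a term with respect to an arity assignment. -/
inductive WF (ar : F → ℕ) : Term F V → Prop where
  | var (x : V) : WF ar (.var x)
  | app (f : F) (ts : List (Term F V)) :
      ts.length = ar f → (∀ t ∈ ts, WF ar t) → WF ar (.app f ts)

end Term

/-- Number of occurrences of `x` in a sequence of terms. -/
def seqCount {F V : Type} [DecidableEq V] (x : V) (ts : List (Term F V)) : ℕ :=
  (ts.map (Term.count x)).sum

/-- An oriented conditional rewrite rule `l → r ⇐ s1 ≈ t1, …, sk ≈ tk`. -/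
structure CRule (F V : Type) : Type where
  lhs : Term F V
  rhs : Term F V
  conds : List (Term F V × Term F V)

/-- A conditional term rewriting system: a set of conditional rules. -/
abbrev CTRS (F V : Type) := Set (CRule F V)

namespace CRule

variable {F V W : Type}

/-- The sequence `l, t1, …, tk` of "pattern" terms of a rule. -/
def pats (ρ : CRule F V) : List (Term F V) := ρ.lhs :: ρ.conds.map Prod.snd

/-- The sequence `r, s1, …, sk` of "source" terms of a rule. -/
def srcs (ρ : CRule F V) : List (Term F V) := ρ.rhs :: ρ.conds.map Prod.fst

/-- Weak left-linearity: `|l,t1,…,tk|_x = 1` for every `x ∈ Var(r,s1,…,sk)`. -/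
def WLL [DecidableEq V] (ρ : CRule F V) : Prop :=
  ∀ x : V, 0 < seqCount x ρ.srcs → seqCount x ρ.pats = 1

/-- Determinism: `Var(si) ⊆ Var(l, t1, …, t_{i−1})`. -/
def Det [DecidableEq V] (ρ : CRule F V) : Prop :=
  ∀ i : ℕ, ∀ h : i < ρ.conds.length, ∀ x : V,
    0 < Term.count x (ρ.conds.get ⟨i, h⟩).1 →
    0 < seqCount x (ρ.lhs :: (ρ.conds.take i).map Prod.snd)

/-- Type 3: `Var(r) ⊆ Var(l, s1, t1, …, sk, tk)`. -/
def Type3 [DecidableEq V] (ρ : CRule F V) : Prop :=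
  ∀ x : V, 0 < Term.count x ρ.rhs →
    0 < seqCount x (ρ.lhs :: ρ.conds.flatMap (fun c => [c.1, c.2]))

/-- The left-hand side is a non-variable term. -/
def LhsNonVar (ρ : CRule F V) : Prop := ∀ x : V, ρ.lhs ≠ .var x

/-- Renaming the variables of a rule. -/
def mapV (g : V → W) (ρ : CRule F V) : CRule F W :=
  ⟨ρ.lhs.rename g, ρ.rhs.rename g, ρ.conds.map (fun c => (c.1.rename g, c.2.rename g))⟩

end CRule

/-- `R` is a deterministic CTRS (of Type 3, left-hand sides non-variable). -/
def IsDCTRS {F V : Type} [DecidableEq V] (R : CTRS F V) : Prop :=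
  ∀ ρ ∈ R, ρ.Det ∧ ρ.Type3 ∧ ρ.LhsNonVar

/-- All rules of `R` are weakly left-linear. -/
def IsWLL {F V : Type} [DecidableEq V] (R : CTRS F V) : Prop := ∀ ρ ∈ R, ρ.WLL

/-- Closure of a relation under contexts (rewriting below the root). -/
inductive CtxStep {F V : Type} (root : Term F V → Term F V → Prop) :
    Term F V → Term F V → Prop where
  | root {s t : Term F V} : root s t → CtxStep root s t
  | congr {f : F} {pre post : List (Term F V)} {s t : Term F V} :
      CtxStep root s t →
      CtxStep root (.app f (pre ++ s :: post)) (.app f (pre ++ t :: post))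

/-- A root rewrite step using a rule of `R`, conditions evaluated with `prev`. -/
def RootStep {F V : Type} (R : CTRS F V) (prev : Term F V → Term F V → Prop)
    (s t : Term F V) : Prop :=
  ∃ ρ ∈ R, ∃ σ : V → Term F V,
    s = ρ.lhs.subst σ ∧ t = ρ.rhs.subst σ ∧
    ∀ c ∈ ρ.conds, Relation.ReflTransGen prev (c.1.subst σ) (c.2.subst σ)

/-- The level-stratified reduction relation `→_{(n),R}`. -/
def LevelStep {F V : Type} (R : CTRS F V) : ℕ → Term F V → Term F V → Prop
  | 0 => fun _ _ => False
  | n + 1 => CtxStep (RootStep R (LevelStep R n))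

/-- The reduction relation `→_R = ⋃_{n} →_{(n),R}`. -/
def Red {F V : Type} (R : CTRS F V) (s t : Term F V) : Prop :=
  ∃ n : ℕ, LevelStep R n s t

/-- Many-step reduction `→*_R`. -/
def RedStar {F V : Type} (R : CTRS F V) : Term F V → Term F V → Prop :=
  Relation.ReflTransGen (Red R)

/-- `n`-fold composition of a relation. -/
def NFold {α : Type} (r : α → α → Prop) : ℕ → α → α → Prop
  | 0 => fun a b => a = b
  | n + 1 => fun a c => ∃ b, r a b ∧ NFold r n b c

/-- One-hole contexts. -/
inductive Ctx (F V : Type) : Type where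
  | hole : Ctx F V
  | app : F → List (Term F V) → Ctx F V → List (Term F V) → Ctx F V

/-- Filling the hole of a context with a term. -/
def Ctx.fill {F V : Type} : Ctx F V → Term F V → Term F V
  | .hole, t => t
  | .app f pre C post, t => .app f (pre ++ C.fill t :: post)
/-- Embedding of a rule over `F` into the signature `F ⊕ ℕ` extended with the
fresh tuple constructors `tuple_j` (encoded as `Sum.inr j`). -/
def CRule.liftT {F V : Type} (ρ : CRule F V) : CRule (F ⊕ ℕ) V :=
  ⟨ρ.lhs.mapF Sum.inl, ρ.rhs.mapF Sum.inl,
   ρ.conds.map (fun c => (c.1.mapF Sum.inl, c.2.mapF Sum.inl))⟩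

/-- The variable `x` occurs somewhere in the rule `ρ`. -/
def OccursInRule {F V : Type} [DecidableEq V] (ρ : CRule F V) (x : V) : Prop :=
  0 < seqCount x (ρ.lhs :: ρ.rhs :: ρ.conds.flatMap (fun c => [c.1, c.2]))

/-- `ρ'` is a result of applying the transformation `𝕋` to the rule `ρ`:
unconditional rules are kept (embedded into the extended signature); for a
conditional rule, every occurrence of a variable occurring more than once in
`l, t1, …, tk` is replaced by a distinct fresh variable (yielding `l'` and
`t'_1, …, t'_k`), and the condition
`tuple_j(x1,…,xj) ≈ tuple_j(x1σ,…,xjσ)` is appended, where `x1, …, xj` are the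
introduced fresh variables and `σ` is the renaming mapping them back to the
original variables. -/
def IsTRule {F V : Type} [DecidableEq V] (ρ : CRule F V) (ρ' : CRule (F ⊕ ℕ) V) : Prop :=
  (ρ.conds = [] ∧ ρ' = ρ.liftT) ∨
  (ρ.conds ≠ [] ∧
    ∃ (xs : List V) (σ : V → V) (l' : Term (F ⊕ ℕ) V) (ts' : List (Term (F ⊕ ℕ) V)),
      xs.Nodup ∧
      (∀ x ∈ xs, ¬ OccursInRule ρ x) ∧
      (∀ x : V, x ∉ xs → σ x = x) ∧
      ts'.length = ρ.conds.length ∧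
      l'.rename σ = ρ.lhs.mapF Sum.inl ∧
      (∀ (i : ℕ) (h : i < ρ.conds.length) (h' : i < ts'.length),
        (ts'.get ⟨i, h'⟩).rename σ = ((ρ.conds.get ⟨i, h⟩).2).mapF Sum.inl) ∧
      (∀ x ∈ xs, seqCount x (l' :: ts') = 1) ∧
      (∀ x : V, x ∉ xs →
        seqCount x (l' :: ts') =
          if seqCount x ρ.liftT.pats ≤ 1 then seqCount x ρ.liftT.pats else 0) ∧
      ρ' = ⟨l', ρ.rhs.mapF Sum.inl,
            (List.zip (ρ.conds.map (fun c => c.1.mapF Sum.inl)) ts') ++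
              [(.app (Sum.inr xs.length) (xs.map Term.var),
                .app (Sum.inr xs.length) (xs.map (fun x => Term.var (σ x))))]⟩)

/-- `R'` is a result of applying the transformation `𝕋` to the CTRS `R`,
i.e., `R' = { 𝕋(ρ) : ρ ∈ R }`. -/
def IsT {F V : Type} [DecidableEq V] (R : CTRS F V) (R' : CTRS (F ⊕ ℕ) V) : Prop :=
  (∀ ρ ∈ R, ∃ ρ' ∈ R', IsTRule ρ ρ') ∧ (∀ ρ' ∈ R', ∃ ρ ∈ R, IsTRule ρ ρ')

section Helpers

open Relation

variable {F V G W : Type}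

theorem Term.subst_app (σ : V → Term F W) (f : F) (ts : List (Term F V)) :
    (Term.app f ts).subst σ = .app f (ts.map (Term.subst σ)) := by
  simp [Term.subst]

theorem Term.mapF_app (g : F → G) (f : F) (ts : List (Term F V)) :
    (Term.app f ts).mapF g = .app (g f) (ts.map (Term.mapF g)) := by
  simp [Term.mapF]

theorem Term.count_app [DecidableEq V] (x : V) (f : F) (ts : List (Term F V)) :
    (Term.app f ts).count x = (ts.map (Term.count x)).sum := by
  simp [Term.count]

theorem Term.ind {P : Term F V → Prop} (hv : ∀ x, P (.var x))
    (ha : ∀ f ts, (∀ t ∈ ts, P t) → P (.app f ts)) : ∀ t, P t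
  | .var x => hv x
  | .app f ts => ha f ts (fun t _ => Term.ind hv ha t)

theorem Term.rename_app (g : V → W) (f : F) (ts : List (Term F V)) :
    (Term.app f ts).rename g = .app f (ts.map (Term.rename g)) := by
  unfold Term.rename
  rw [Term.subst_app]

theorem list_sum_pos {α : Type} (l : List α) (f : α → ℕ) :
    0 < (l.map f).sum ↔ ∃ a ∈ l, 0 < f a := by
  induction l with
  | nil => simp
  | cons a l ih => simp [← ih]

theorem seqCount_pos [DecidableEq V] (x : V) (ts : List (Term F V)) :
    0 < seqCount x ts ↔ ∃ t ∈ ts, 0 < t.count x := list_sum_pos _ _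

theorem Term.count_mapF [DecidableEq V] (g : F → G) (x : V) (t : Term F V) :
    (t.mapF g).count x = t.count x := by
  induction t using Term.ind with
  | hv y => simp [Term.mapF, Term.count]
  | ha f ts ih =>
    rw [Term.mapF_app, Term.count_app, Term.count_app, List.map_map]
    congr 1
    exact List.map_congr_left ih

theorem Term.count_rename [DecidableEq V] (g : V → V) (x : V) (t : Term F V) :
    0 < t.count x → 0 < (t.rename g).count (g x) := by
  induction t using Term.ind with
  | hv y =>
    intro h
    by_cases e : y = x
    · subst e; simp [Term.rename, Term.subst, Term.count]
    · simp [Term.count, e] at h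
  | ha f ts ih =>
    rw [Term.rename_app, Term.count_app, Term.count_app, list_sum_pos, list_sum_pos]
    rintro ⟨t, ht, hc⟩
    exact ⟨_, List.mem_map_of_mem ht, ih t ht hc⟩

theorem Term.subst_rename (g : V → V) (σ : V → Term F V) (t : Term F V) :
    (t.rename g).subst σ = t.subst (fun x => σ (g x)) := by
  induction t using Term.ind with
  | hv y => simp [Term.rename, Term.subst]
  | ha f ts ih =>
    rw [Term.rename_app, Term.subst_app, Term.subst_app, List.map_map]
    congr 1
    exact List.map_congr_left ih

theorem Term.mapF_subst (g : F → G) (σ : V → Term F V) (t : Term F V) :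
    (t.subst σ).mapF g = (t.mapF g).subst (fun x => (σ x).mapF g) := by
  induction t using Term.ind with
  | hv y => simp [Term.mapF, Term.subst]
  | ha f ts ih =>
    rw [Term.subst_app, Term.mapF_app, Term.mapF_app, Term.subst_app, List.map_map, List.map_map]
    congr 1
    exact List.map_congr_left ih

theorem Term.subst_congr [DecidableEq V] (σ τ : V → Term F V) (t : Term F V)
    (h : ∀ x, 0 < t.count x → σ x = τ x) : t.subst σ = t.subst τ := by
  induction t using Term.ind with
  | hv y => simpa [Term.subst] using h y (by simp [Term.count])
  | ha f ts ih =>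
    rw [Term.subst_app, Term.subst_app]
    congr 1
    refine List.map_congr_left fun t ht => ih t ht fun x hx => h x ?_
    rw [Term.count_app, list_sum_pos]
    exact ⟨t, ht, hx⟩

/-- Collapse of terms over the extended signature. -/
def Term.phi (d : Term F V) : Term (F ⊕ ℕ) V → Term F V
  | .var x => .var x
  | .app (Sum.inl f) ts => .app f (ts.attach.map (fun ⟨t, _⟩ => Term.phi d t))
  | .app (Sum.inr _) _ => d

theorem Term.phi_app (d : Term F V) (f : F) (ts : List (Term (F ⊕ ℕ) V)) :
    Term.phi d (.app (Sum.inl f) ts) = .app f (ts.map (Term.phi d)) := by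
  simp [Term.phi]

theorem Term.phi_subst (d : Term F V) (σ : V → Term (F ⊕ ℕ) V) (t : Term F V) :
    Term.phi d ((t.mapF Sum.inl).subst σ) = t.subst (fun x => Term.phi d (σ x)) := by
  induction t using Term.ind with
  | hv y => simp [Term.mapF, Term.subst]
  | ha f ts ih =>
    rw [Term.mapF_app, Term.subst_app, Term.phi_app, Term.subst_app, List.map_map, List.map_map]
    congr 1
    exact List.map_congr_left ih

theorem Term.phi_mapF (d : Term F V) (t : Term F V) :
    Term.phi d (t.mapF Sum.inl) = t := by
  induction t using Term.ind with
  | hv y => simp [Term.mapF, Term.phi]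
  | ha f ts ih =>
    rw [Term.mapF_app, Term.phi_app, List.map_map]
    congr 1
    exact (List.map_congr_left ih).trans (List.map_id _)

theorem CtxStep.mono {p q : Term F V → Term F V → Prop} (h : ∀ a b, p a b → q a b)
    {s t : Term F V} (hs : CtxStep p s t) : CtxStep q s t := by
  induction hs with
  | root h' => exact .root (h _ _ h')
  | congr _ ih => exact .congr ih

theorem RootStep.mono {R : CTRS F V} {p q : Term F V → Term F V → Prop}
    (h : ∀ a b, p a b → q a b) {s t : Term F V} (hs : RootStep R p s t) : RootStep R q s t := by
  obtain ⟨ρ, hρ, σ, h1, h2, h3⟩ := hs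
  exact ⟨ρ, hρ, σ, h1, h2, fun c hc => ReflTransGen.mono h _ _ (h3 c hc)⟩

theorem LevelStep.succ {R : CTRS F V} (n : ℕ) :
    ∀ s t, LevelStep R n s t → LevelStep R (n + 1) s t := by
  induction n with
  | zero => intro s t h; exact h.elim
  | succ n ih => intro s t h; exact CtxStep.mono (fun _ _ => RootStep.mono ih) h

theorem LevelStep.mono {R : CTRS F V} {n m : ℕ} (hnm : n ≤ m) :
    ∀ s t, LevelStep R n s t → LevelStep R m s t := by
  induction hnm with
  | refl => intro s t h; exact h
  | step _ ih => intro s t h; exact LevelStep.succ _ _ _ (ih _ _ h)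

theorem RedStar.level {R : CTRS F V} {s t : Term F V} (h : RedStar R s t) :
    ∃ n, ReflTransGen (LevelStep R n) s t := by
  induction h with
  | refl => exact ⟨0, .refl⟩
  | tail _ h2 ih =>
    obtain ⟨n, hn⟩ := ih
    obtain ⟨m, hm⟩ := h2
    exact ⟨max n m, (ReflTransGen.mono (LevelStep.mono (le_max_left _ _)) _ _ hn).tail
      (LevelStep.mono (le_max_right _ _) _ _ hm)⟩

theorem RootStep.red {R : CTRS F V} {s t : Term F V} (h : RootStep R (Red R) s t) :
    Red R s t := by
  obtain ⟨ρ, hρ, σ, h1, h2, h3⟩ := h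
  have key : ∀ l : List (Term F V × Term F V),
      (∀ c ∈ l, ReflTransGen (Red R) (c.1.subst σ) (c.2.subst σ)) →
      ∃ n, ∀ c ∈ l, ReflTransGen (LevelStep R n) (c.1.subst σ) (c.2.subst σ) := by
    intro l
    induction l with
    | nil => intro _; exact ⟨0, by simp⟩
    | cons a l ih =>
      intro h
      obtain ⟨n, hn⟩ := ih fun c hc => h c (List.mem_cons_of_mem _ hc)
      obtain ⟨m, hm⟩ := RedStar.level (h a List.mem_cons_self)
      refine ⟨max n m, fun c hc => ?_⟩
      rcases List.mem_cons.1 hc with rfl | hc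
      · exact ReflTransGen.mono (LevelStep.mono (le_max_right _ _)) _ _ hm
      · exact ReflTransGen.mono (LevelStep.mono (le_max_left _ _)) _ _ (hn c hc)
  obtain ⟨n, hn⟩ := key _ h3
  exact ⟨n + 1, CtxStep.root ⟨ρ, hρ, σ, h1, h2, hn⟩⟩

theorem Red.congr {R : CTRS F V} {f : F} {pre post : List (Term F V)} {s t : Term F V}
    (h : Red R s t) : Red R (.app f (pre ++ s :: post)) (.app f (pre ++ t :: post)) := by
  obtain ⟨n, hn⟩ := h
  cases n with
  | zero => exact hn.elim
  | succ n => exact ⟨n + 1, CtxStep.congr hn⟩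

theorem RedStar.congr {R : CTRS F V} {f : F} {pre post : List (Term F V)} {s t : Term F V}
    (h : RedStar R s t) : RedStar R (.app f (pre ++ s :: post)) (.app f (pre ++ t :: post)) := by
  induction h with
  | refl => exact .refl
  | tail _ h2 ih => exact ReflTransGen.tail ih (Red.congr h2)

theorem RedStar.args {R : CTRS F V} {f : F} {ss ts : List (Term F V)}
    (h : List.Forall₂ (RedStar R) ss ts) :
    RedStar R (.app f ss) (.app f ts) := by
  suffices H : ∀ pre, RedStar R (.app f (pre ++ ss)) (.app f (pre ++ ts)) from H []
  induction h with
  | nil => intro pre; exact .refl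
  | @cons a b l1 l2 hab _ ih =>
    intro pre
    refine ReflTransGen.trans (RedStar.congr hab) ?_
    have := ih (pre ++ [b])
    simpa [RedStar] using this

/-- Key comparison lemma. -/
theorem RedStar.phi_rename {R : CTRS F V} (d : Term F V) (g : V → V)
    (σ : V → Term (F ⊕ ℕ) V) (τ : V → Term F V) (u : Term (F ⊕ ℕ) V)
    (h : ∀ x, RedStar R (Term.phi d (σ x)) (τ (g x))) :
    ∀ w : Term F V, u.rename g = w.mapF Sum.inl →
      RedStar R (Term.phi d (u.subst σ)) (w.subst τ) := by
  induction u using Term.ind with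
  | hv x =>
    intro w hw
    cases w with
    | var y =>
      simp only [Term.rename, Term.subst, Term.mapF, Term.var.injEq] at hw
      subst hw
      simpa [Term.subst] using h x
    | app f ws => simp [Term.rename, Term.subst, Term.mapF] at hw
  | ha f ts ih =>
    intro w hw
    cases w with
    | var y => simp [Term.rename, Term.subst, Term.mapF] at hw
    | app f' ws =>
      rw [Term.rename_app, Term.mapF_app] at hw
      injection hw with h1 h2
      subst h1
      rw [Term.subst_app, Term.phi_app, Term.subst_app]
      apply RedStar.args
      induction ts generalizing ws with
      | nil =>
        cases ws with
        | nil => exact .nil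
        | cons a b => simp at h2
      | cons a l ih2 =>
        cases ws with
        | nil => simp at h2
        | cons b l' =>
          simp only [List.map_cons, List.cons.injEq] at h2
          refine .cons (ih a List.mem_cons_self b h2.1) ?_
          exact ih2 (fun t ht => ih t (List.mem_cons_of_mem _ ht)) l' h2.2

theorem forall2_refl_trans {α : Type} {r : α → α → Prop} {l1 l2 l3 : List α}
    (h1 : List.Forall₂ (ReflTransGen r) l1 l2) (h2 : List.Forall₂ (ReflTransGen r) l2 l3) :
    List.Forall₂ (ReflTransGen r) l1 l3 := by
  induction h1 generalizing l3 with
  | nil => exact h2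
  | cons a _ ih =>
    cases h2 with
    | cons b h2 => exact .cons (a.trans b) (ih h2)

theorem forall2_refl_step {α : Type} {r : α → α → Prop} {a b : α} (hab : r a b)
    (pre post : List α) :
    List.Forall₂ (ReflTransGen r) (pre ++ a :: post) (pre ++ b :: post) := by
  induction pre with
  | nil => exact .cons (.single hab) (List.forall₂_refl _)
  | cons c pre ih => exact .cons .refl ih

/-- Left-hand sides are never rooted by a tuple symbol. -/
def NoTuple (R' : CTRS (F ⊕ ℕ) V) : Prop :=
  ∀ ρ ∈ R', ∃ f ts, ρ.lhs = .app (Sum.inl f) ts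

theorem LevelStep.tuple {R' : CTRS (F ⊕ ℕ) V} (hN : NoTuple R') {n k : ℕ}
    {us : List (Term (F ⊕ ℕ) V)} {v : Term (F ⊕ ℕ) V}
    (h : LevelStep R' n (.app (Sum.inr k) us) v) :
    ∃ vs, v = .app (Sum.inr k) vs ∧ List.Forall₂ (ReflTransGen (LevelStep R' n)) us vs := by
  cases n with
  | zero => exact h.elim
  | succ n =>
    change CtxStep _ _ _ at h
    generalize hu : Term.app (Sum.inr k) us = u at h
    cases h with
    | root h =>
      obtain ⟨ρ, hρ, σ, h1, _, _⟩ := h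
      obtain ⟨f, ts, hf⟩ := hN ρ hρ
      rw [hf, Term.subst_app, ← hu] at h1
      simp at h1
    | congr h =>
      injection hu with e1 e2
      subst e1 e2
      exact ⟨_, rfl, forall2_refl_step (r := LevelStep R' (n + 1)) h _ _⟩

theorem LevelStep.tuple_star {R' : CTRS (F ⊕ ℕ) V} (hN : NoTuple R') {n k : ℕ}
    {us : List (Term (F ⊕ ℕ) V)} {v : Term (F ⊕ ℕ) V}
    (h : ReflTransGen (LevelStep R' n) (.app (Sum.inr k) us) v) :
    ∃ vs, v = .app (Sum.inr k) vs ∧ List.Forall₂ (ReflTransGen (LevelStep R' n)) us vs := by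
  induction h with
  | refl => exact ⟨_, rfl, List.forall₂_refl _⟩
  | tail _ h2 ih =>
    obtain ⟨vs, rfl, hv⟩ := ih
    obtain ⟨ws, rfl, hw⟩ := LevelStep.tuple hN h2
    exact ⟨ws, rfl, forall2_refl_trans hv hw⟩

theorem noTuple_aux (g : V → V) (l : Term F V) (hl : ∀ x, l ≠ .var x) (l' : Term (F ⊕ ℕ) V)
    (h : l'.rename g = l.mapF Sum.inl) : ∃ f ts, l' = .app (Sum.inl f) ts := by
  cases l with
  | var x => exact (hl x rfl).elim
  | app f ts =>
    cases l' with
    | var x => simp [Term.rename, Term.subst, Term.mapF] at h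
    | app f' ts' =>
      rw [Term.rename_app, Term.mapF_app] at h
      injection h with h1 h2
      exact ⟨f, ts', by rw [h1]⟩

theorem noTuple_of_isT [DecidableEq V] {R : CTRS F V} {R' : CTRS (F ⊕ ℕ) V}
    (hD : IsDCTRS R) (hT : IsT R R') : NoTuple R' := by
  intro ρ' hρ'
  obtain ⟨ρ, hρ, h⟩ := hT.2 ρ' hρ'
  have hl := (hD ρ hρ).2.2
  rcases h with ⟨_, rfl⟩ | ⟨_, xs, g, l', ts', _, _, _, _, hl', _, _, _, rfl⟩
  · rcases ρ with ⟨l, r, c⟩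
    cases l with
    | var x => exact (hl x rfl).elim
    | app f ts => exact ⟨f, _, Term.mapF_app _ _ _⟩
  · exact noTuple_aux g _ hl l' hl'

theorem occ_of_fst [DecidableEq V] {ρ : CRule F V} {x : V} {c : Term F V × Term F V}
    (hc : c ∈ ρ.conds) (h : 0 < c.1.count x) : OccursInRule ρ x := by
  refine (seqCount_pos _ _).2 ⟨c.1, ?_, h⟩
  simp only [List.mem_cons, List.mem_flatMap]
  exact Or.inr (Or.inr ⟨c, hc, by simp⟩)

theorem occ_of_snd [DecidableEq V] {ρ : CRule F V} {x : V} {c : Term F V × Term F V}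
    (hc : c ∈ ρ.conds) (h : 0 < c.2.count x) : OccursInRule ρ x := by
  refine (seqCount_pos _ _).2 ⟨c.2, ?_, h⟩
  simp only [List.mem_cons, List.mem_flatMap]
  exact Or.inr (Or.inr ⟨c, hc, by simp⟩)

theorem occ_of_lhs [DecidableEq V] {ρ : CRule F V} {x : V}
    (h : 0 < ρ.lhs.count x) : OccursInRule ρ x :=
  (seqCount_pos _ _).2 ⟨ρ.lhs, by simp, h⟩

theorem occ_of_rhs [DecidableEq V] {ρ : CRule F V} {x : V}
    (h : 0 < ρ.rhs.count x) : OccursInRule ρ x :=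
  (seqCount_pos _ _).2 ⟨ρ.rhs, by simp, h⟩

theorem RedStar.lift_of {R : CTRS F V} {R' : CTRS (F ⊕ ℕ) V} {p : Term F V → Term F V → Prop}
    (h : ∀ s t, p s t → Red R' (s.mapF Sum.inl) (t.mapF Sum.inl)) {s t : Term F V}
    (hs : ReflTransGen p s t) : RedStar R' (s.mapF Sum.inl) (t.mapF Sum.inl) :=
  ReflTransGen.lift (Term.mapF Sum.inl) h _ _ hs

theorem forward [DecidableEq V] {R : CTRS F V} {R' : CTRS (F ⊕ ℕ) V} (hT : IsT R R') (n : ℕ) :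
    ∀ s t, LevelStep R n s t → Red R' (s.mapF Sum.inl) (t.mapF Sum.inl) := by
  induction n with
  | zero => intro s t h; exact h.elim
  | succ n ihn =>
    intro s t h
    change CtxStep _ _ _ at h
    induction h with
    | congr _ ih =>
      rw [Term.mapF_app, Term.mapF_app, List.map_append, List.map_append, List.map_cons,
        List.map_cons]
      exact Red.congr ih
    | root h =>
      obtain ⟨ρ, hρ, σ, rfl, rfl, hc⟩ := h
      obtain ⟨ρ', hρ', hI⟩ := hT.1 ρ hρ
      apply RootStep.red
      refine ⟨ρ', hρ', ?_⟩
      rcases hI with ⟨he, rfl⟩ |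
        ⟨_, xs, g, l', ts', _, hfr, hg, hlen, hl', ht', hx1, _, rfl⟩
      · refine ⟨fun x => (σ x).mapF Sum.inl, Term.mapF_subst _ _ _, Term.mapF_subst _ _ _, ?_⟩
        simp [CRule.liftT, he]
      · have hsub : ∀ u : Term F V, (∀ x, 0 < u.count x → OccursInRule ρ x) →
            (u.subst σ).mapF Sum.inl =
              (u.mapF Sum.inl).subst (fun x => (σ (g x)).mapF (Sum.inl : F → F ⊕ ℕ)) := by
          intro u hu
          rw [Term.mapF_subst]
          apply Term.subst_congr
          intro x hx
          rw [Term.count_mapF] at hx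
          rw [hg x fun hm => hfr x hm (hu x hx)]
        refine ⟨fun x => (σ (g x)).mapF Sum.inl, ?_, hsub _ fun x hx => occ_of_rhs hx, ?_⟩
        · rw [Term.mapF_subst, ← hl', Term.subst_rename]
        · intro c hcm
          rcases List.mem_append.1 hcm with hcm | hcm
          · obtain ⟨i, hi, rfl⟩ := List.mem_iff_getElem.1 hcm
            have hi1 : i < ρ.conds.length := by simp at hi; omega
            have hi2 : i < ts'.length := by omega
            have h2 := ht' i hi1 hi2
            simp only [List.get_eq_getElem] at h2
            simp only [List.getElem_zip, List.getElem_map]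
            rw [← hsub _ fun x hx => occ_of_fst (List.getElem_mem hi1) hx,
              ← Term.subst_rename g (fun x => (σ x).mapF Sum.inl), h2, ← Term.mapF_subst]
            exact RedStar.lift_of (R := R) ihn (hc _ (List.getElem_mem hi1))
          · rw [List.mem_singleton] at hcm
            subst hcm
            have : ∀ x ∈ xs, g (g x) = g x := by
              intro x hx
              apply hg
              intro hm
              apply hfr _ hm
              have hp : 0 < seqCount x (l' :: ts') := by rw [hx1 x hx]; exact one_pos
              obtain ⟨u, hu, hup⟩ := (seqCount_pos _ _).1 hp
              have hup' := Term.count_rename g x u hup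
              rcases List.mem_cons.1 hu with rfl | hu
              · rw [hl', Term.count_mapF] at hup'
                exact occ_of_lhs hup'
              · obtain ⟨i, hi, rfl⟩ := List.mem_iff_getElem.1 hu
                have hi1 : i < ρ.conds.length := by omega
                have h2 := ht' i hi1 hi
                simp only [List.get_eq_getElem] at h2
                rw [h2, Term.count_mapF] at hup'
                exact occ_of_snd (List.getElem_mem hi1) hup'
            have e : (xs.map Term.var).map
                  (Term.subst (fun x => (σ (g x)).mapF (Sum.inl : F → F ⊕ ℕ))) =
                (xs.map (fun x => Term.var (g x))).map
                  (Term.subst (fun x => (σ (g x)).mapF (Sum.inl : F → F ⊕ ℕ))) := by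
              rw [List.map_map, List.map_map]
              refine List.map_congr_left fun x hx => ?_
              simp [Term.subst, this x hx]
            simp only [Term.subst_app]
            rw [e]

theorem backward [DecidableEq V] {R : CTRS F V} {R' : CTRS (F ⊕ ℕ) V} (hD : IsDCTRS R)
    (hT : IsT R R') (d : Term F V) (n : ℕ) :
    ∀ s t, LevelStep R' n s t → RedStar R (Term.phi d s) (Term.phi d t) := by
  have hN := noTuple_of_isT hD hT
  induction n with
  | zero => intro s t h; exact h.elim
  | succ n ihn =>
    have ihs : ∀ s t, ReflTransGen (LevelStep R' n) s t →
        RedStar R (Term.phi d s) (Term.phi d t) := by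
      intro s t h
      induction h with
      | refl => exact .refl
      | tail _ h2 ih => exact ReflTransGen.trans ih (ihn _ _ h2)
    intro s t h
    change CtxStep _ _ _ at h
    induction h with
    | @congr f pre post s t _ ih =>
      cases f with
      | inr k => simp only [Term.phi]; exact .refl
      | inl f =>
        rw [Term.phi_app, Term.phi_app, List.map_append, List.map_append, List.map_cons,
          List.map_cons]
        exact RedStar.congr ih
    | root h =>
      obtain ⟨ρ', hρ', σ, rfl, rfl, hc⟩ := h
      obtain ⟨ρ, hρ, hI⟩ := hT.2 ρ' hρ'
      rcases hI with ⟨he, rfl⟩ |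
        ⟨_, xs, g, l', ts', _, hfr, hg, hlen, hl', ht', hx1, _, rfl⟩
      · refine ReflTransGen.single (RootStep.red ⟨ρ, hρ, fun x => Term.phi d (σ x),
          Term.phi_subst _ _ _, Term.phi_subst _ _ _, ?_⟩)
        simp [he]
      · have htup := hc _ (List.mem_append_right _ (List.mem_singleton.2 rfl))
        simp only [Term.subst_app, List.map_map] at htup
        obtain ⟨vs, hv, hF⟩ := LevelStep.tuple_star hN htup
        injection hv with _ hv
        subst hv
        have hx : ∀ x, RedStar R (Term.phi d (σ x)) (Term.phi d (σ (g x))) := by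
          intro x
          by_cases hm : x ∈ xs
          · rw [List.forall₂_map_left_iff, List.forall₂_map_right_iff, List.forall₂_same] at hF
            have := hF x hm
            simp only [Function.comp, Term.subst] at this
            exact ihs _ _ this
          · rw [hg x hm]; exact .refl
        have hph := RedStar.phi_rename (R := R) d g σ (fun x => Term.phi d (σ x))
        refine ReflTransGen.tail (hph l' hx ρ.lhs hl') (RootStep.red ⟨ρ, hρ,
          fun x => Term.phi d (σ x), rfl, Term.phi_subst _ _ _, ?_⟩)
        intro c hcm
        obtain ⟨i, hi, rfl⟩ := List.mem_iff_getElem.1 hcm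
        have hi2 : i < ts'.length := by omega
        refine ReflTransGen.trans ?_ (hph ts'[i] hx _ (ht' i hi hi2))
        rw [← Term.phi_subst]
        refine ihs _ _ (hc (ρ.conds[i].1.mapF Sum.inl, ts'[i]) (List.mem_append_left _ ?_))
        refine List.mem_iff_getElem.2 ⟨i, by simp; omega, ?_⟩
        simp

end Helpers


/-- **Theorem (reduction equivalence of `R` and `𝕋(R)`).**
Let `R` be a WLL DCTRS over `F`. Then the many-step reduction relations of `R`
and of `𝕋(R)` coincide on `T(F,V)`: for all `s, t ∈ T(F,V)`,
`s →*_R t` iff `s →*_{𝕋(R)} t`. -/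
theorem T_preserves_reduction {F V : Type} [DecidableEq V]
    (R : CTRS F V) (R' : CTRS (F ⊕ ℕ) V)
    (hD : IsDCTRS R) (hW : IsWLL R) (hT : IsT R R')
    (s t : Term F V) :
    RedStar R s t ↔ RedStar R' (s.mapF Sum.inl) (t.mapF Sum.inl) := by

  constructor
  · intro h
    exact RedStar.lift_of (R := R) (fun a b ⟨n, hn⟩ => forward hT n a b hn) h
  · intro h
    have key : ∀ u, RedStar R' (s.mapF Sum.inl) u → RedStar R s (Term.phi s u) := by
      intro u hu
      induction hu with
      | refl => rw [Term.phi_mapF]; exact .refl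
      | tail _ h2 ih =>
        obtain ⟨n, hn⟩ := h2
        exact Relation.ReflTransGen.trans ih (backward hD hT s n _ _ hn)
    have := key _ h
    rwa [Term.phi_mapF] at this
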